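/- For n ≥ 2, let f_{P_n}(q) ∈ ℤ[[q]] be the formal power series whose coefficient of q^m is the number of order-reversing maps σ : P_n → ℕ with Σ_{a ∈ P_n} σ(a) = m, where P_n is the 2-rowed poset with double diagonals. Then f_{P_n}(q) · ∏_{k=1}^{2n} (1 − q^k) = ∏_{k=1}^{n−1} (1 + q^{2k}) as an identity of formal power series in ℤ[[q]]. -/

import Mathlib

/-- The generating relations of the 2-rowed poset with double diagonals `P_n`,
on the labels `1, …, 2n` (as natural numbers): `1 < 2`, `1 < 3`;
`2k < 2k+2`, `2k < 2k+3`, `2k+1 < 2k+2`, `2k+1 < 2k+3` for `1 ≤ k ≤ n-2`;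
and `2n-2 < 2n`, `2n-1 < 2n`. -/
def prel (n : ℕ) (i j : ℕ) : Prop :=
  (i = 1 ∧ (j = 2 ∨ j = 3)) ∨
  (∃ k, 1 ≤ k ∧ k ≤ n - 2 ∧ (i = 2 * k ∨ i = 2 * k + 1) ∧
    (j = 2 * k + 2 ∨ j = 2 * k + 3)) ∨
  ((i = 2 * n - 2 ∨ i = 2 * n - 1) ∧ j = 2 * n)

/-- The order of `P_n` generated by the relations `prel n`. -/
def pOrd (n : ℕ) : ℕ → ℕ → Prop := Relation.ReflTransGen (prel n)

/-- `f_{P_n}(q)`: the coefficient of `q^m` is the number of order-reversing maps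
`σ : P_n → ℕ` with `Σ_{a ∈ P_n} σ(a) = m`.  Here the element with label `i+1`
of `P_n` is represented by `i : Fin (2n)`. -/
noncomputable def fPq (n : ℕ) : PowerSeries ℤ :=
  PowerSeries.mk fun m =>
    (({σ : Fin (2 * n) → ℕ |
        (∀ i j : Fin (2 * n), pOrd n ((i : ℕ) + 1) ((j : ℕ) + 1) → σ j ≤ σ i) ∧
        ∑ a, σ a = m}).ncard : ℤ)

/-!
The support of an order-reversing map `σ : α → ℕ` is a lower set `J`, and `σ` minus the indicator of
`J` is an arbitrary order-reversing map vanishing outside `J`. Writing `F I` for the generating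
function of the order-reversing maps on a lower set `I`, this gives `F I = ∑ J, q ^ |J| * F J` over
the lower sets `J ⊆ I`. If the elements below `a` are exactly those of `I`, `N` in number, then the
lower sets contained in `I ∪ {a}` are `I ∪ {a}` itself and those contained in `I`, whence
`(1 - q ^ (N + 1)) * F (I ∪ {a}) = F I`. If `b ≠ a` has the same elements below it, the lower sets
contained in `I ∪ {a, b}` but not in `I ∪ {a}` are `I ∪ {b}` and `I ∪ {a, b}`, whence
`(1 - q ^ (N + 1)) * (1 - q ^ (N + 2)) * F (I ∪ {a, b}) = (1 + q ^ (N + 1)) * F I`.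
Finally `P_n` is the ordinal sum of the antichains `{1}, {2, 3}, …, {2n - 2, 2n - 1}, {2n}`, the
antichain containing a label `l` being determined by `l / 2`.
-/

open Finset PowerSeries

section AntitoneMaps

variable {α : Type*} [PartialOrder α]

open Classical in
/-- The finite set of the lower sets of `α` contained in `I`. -/
noncomputable def lowerSubsets (I : Finset α) : Finset (Finset α) :=
  {J ∈ I.powerset | IsLowerSet (J : Set α)}

theorem mem_lowerSubsets {I J : Finset α} :
    J ∈ lowerSubsets I ↔ J ⊆ I ∧ IsLowerSet (J : Set α) := by
  simp only [lowerSubsets, mem_filter, mem_powerset]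

theorem filter_ne_zero_mem_lowerSubsets {I : Finset α} {σ : α → ℕ} (hσ : Antitone σ)
    (hI : ∀ a, σ a ≠ 0 → a ∈ I) : {a ∈ I | σ a ≠ 0} ∈ lowerSubsets I := by
  refine mem_lowerSubsets.2 ⟨filter_subset _ _, fun a b hba ha => ?_⟩
  have hb : σ b ≠ 0 := ((Nat.pos_of_ne_zero (mem_filter.1 ha).2).trans_le (hσ hba)).ne'
  exact mem_filter.2 ⟨hI b hb, hb⟩

theorem notMem_of_Iio_eq {I : Finset α} {a : α} (ha : Set.Iio a = I) : a ∉ I := fun h =>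
  lt_irrefl a (ha.ge h)

variable [DecidableEq α]

open Classical in
/-- The order-reversing maps `α → ℕ` that vanish outside `I` and whose values sum to `m`. When `I`
is a lower set these are the order-reversing maps `I → ℕ`, extended by zero; fixing the domain `α`
lets `I` vary without any transport of maps. -/
noncomputable def antitoneMaps (I : Finset α) (m : ℕ) : Finset (α → ℕ) :=
  {σ ∈ I.piAntidiag m | Antitone σ}

theorem mem_antitoneMaps {I : Finset α} {m : ℕ} {σ : α → ℕ} :
    σ ∈ antitoneMaps I m ↔ (∑ a ∈ I, σ a = m ∧ ∀ a, σ a ≠ 0 → a ∈ I) ∧ Antitone σ := by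
  simp only [antitoneMaps, mem_filter, mem_piAntidiag]

/-- The generating function, by the sum of the values, of the order-reversing maps `α → ℕ` that
vanish outside `I`. -/
noncomputable def antitoneGF (I : Finset α) : ℤ⟦X⟧ :=
  mk fun m => (#(antitoneMaps I m) : ℤ)

theorem antitoneGF_empty : antitoneGF (∅ : Finset α) = 1 := by
  ext m
  have antitone_zero : Antitone (0 : α → ℕ) := antitone_const
  by_cases hm : m = 0 <;>
    simp [antitoneGF, antitoneMaps, coeff_one, piAntidiag_empty, filter_singleton, antitone_zero,
      hm]

theorem antitone_add_indicator_one {J : Finset α} (hJ : IsLowerSet (J : Set α)) {τ : α → ℕ}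
    (hτ : Antitone τ) : Antitone fun a => τ a + if a ∈ J then 1 else 0 := by
  refine hτ.add fun a b hab => ?_
  by_cases hb : b ∈ J
  · have ha : a ∈ J := hJ hab hb
    simp [ha, hb]
  · simp [hb]

theorem sub_one_mem_antitoneMaps {J : Finset α} {m : ℕ} {σ : α → ℕ}
    (hσ : σ ∈ antitoneMaps J (m + #J)) (hpos : ∀ a ∈ J, σ a ≠ 0) :
    (fun a => σ a - 1) ∈ antitoneMaps J m := by
  obtain ⟨⟨hsum, hsupp⟩, hanti⟩ := mem_antitoneMaps.1 hσ
  refine mem_antitoneMaps.2 ⟨⟨?_, fun a ha => hsupp a (by omega)⟩,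
    fun a b hab => Nat.sub_le_sub_right (hanti hab) 1⟩
  have hsub : ∑ a ∈ J, (σ a - 1) + #J = ∑ a ∈ J, σ a := by
    rw [card_eq_sum_ones, ← sum_add_distrib]
    exact sum_congr rfl fun a ha => Nat.succ_pred_eq_of_ne_zero (hpos a ha)
  omega

theorem add_indicator_one_mem_antitoneMaps {J : Finset α} {m : ℕ} {τ : α → ℕ}
    (hJ : IsLowerSet (J : Set α)) (hτ : τ ∈ antitoneMaps J m) :
    (fun a => τ a + if a ∈ J then 1 else 0) ∈ antitoneMaps J (m + #J) := by
  obtain ⟨⟨hsum, hsupp⟩, hanti⟩ := mem_antitoneMaps.1 hτ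
  refine mem_antitoneMaps.2 ⟨⟨by simp [sum_add_distrib, hsum], fun a ha => ?_⟩,
    antitone_add_indicator_one hJ hanti⟩
  by_contra haJ
  exact haJ (hsupp a (by simpa [haJ] using ha))

theorem card_filter_pos_antitoneMaps {J : Finset α} (hJ : IsLowerSet (J : Set α)) (m : ℕ) :
    #{σ ∈ antitoneMaps J (m + #J) | ∀ a ∈ J, σ a ≠ 0} = #(antitoneMaps J m) := by
  refine card_nbij' (fun σ a => σ a - 1) (fun τ a => τ a + if a ∈ J then 1 else 0)
    (fun σ hσ => ?_) (fun τ hτ => ?_) (fun σ hσ => ?_) fun τ hτ => ?_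
  · obtain ⟨hσ, hpos⟩ := mem_filter.1 hσ
    exact sub_one_mem_antitoneMaps hσ hpos
  · exact mem_filter.2
      ⟨add_indicator_one_mem_antitoneMaps hJ hτ, fun a ha => by simp [ha]⟩
  · obtain ⟨hσ, hpos⟩ := mem_filter.1 hσ
    have hsupp := (mem_antitoneMaps.1 hσ).1.2
    funext a
    grind
  · have hsupp := (mem_antitoneMaps.1 hτ).1.2
    funext a
    grind

theorem coeff_X_pow_card_mul_antitoneGF {J : Finset α} (hJ : IsLowerSet (J : Set α)) (m : ℕ) :
    coeff m (X ^ #J * antitoneGF J) = (#{σ ∈ antitoneMaps J m | ∀ a ∈ J, σ a ≠ 0} : ℤ) := by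
  rw [coeff_X_pow_mul']
  split_ifs with hm
  · obtain ⟨m, rfl⟩ := Nat.exists_eq_add_of_le' hm
    rw [card_filter_pos_antitoneMaps hJ, antitoneGF, coeff_mk, Nat.add_sub_cancel]
  · symm
    rw [Nat.cast_eq_zero, card_eq_zero, filter_eq_empty_iff]
    intro σ hσ hpos
    have hle : #J ≤ ∑ a ∈ J, σ a := by
      simpa using J.card_nsmul_le_sum σ 1 fun a ha => Nat.one_le_iff_ne_zero.2 (hpos a ha)
    exact hm (hle.trans_eq (mem_antitoneMaps.1 hσ).1.1)

theorem filter_support_eq_of_subset {I J : Finset α} (hJI : J ⊆ I) (m : ℕ) :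
    {σ ∈ antitoneMaps I m | {a ∈ I | σ a ≠ 0} = J} =
      {σ ∈ antitoneMaps J m | ∀ a ∈ J, σ a ≠ 0} := by
  ext σ
  simp only [mem_filter, mem_antitoneMaps]
  constructor
  · rintro ⟨⟨⟨hsum, hsupp⟩, hanti⟩, rfl⟩
    exact ⟨⟨⟨(sum_filter_ne_zero I).trans hsum, fun a ha => mem_filter.2 ⟨hsupp a ha, ha⟩⟩, hanti⟩,
      fun a ha => (mem_filter.1 ha).2⟩
  · rintro ⟨⟨⟨hsum, hsupp⟩, hanti⟩, hpos⟩
    have hsum_eq : ∑ a ∈ J, σ a = ∑ a ∈ I, σ a :=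
      sum_subset hJI fun a _ ha => by_contra fun h => ha (hsupp a h)
    refine ⟨⟨⟨hsum_eq ▸ hsum, fun a ha => hJI (hsupp a ha)⟩, hanti⟩, ?_⟩
    ext a
    exact mem_filter.trans ⟨fun h => hsupp a h.2, fun h => ⟨hJI h, hpos a h⟩⟩

theorem antitoneGF_eq_sum_lowerSubsets (I : Finset α) :
    antitoneGF I = ∑ J ∈ lowerSubsets I, X ^ #J * antitoneGF J := by
  ext m
  have hsupport : Set.MapsTo (fun σ => {a ∈ I | σ a ≠ 0}) (antitoneMaps I m : Set (α → ℕ))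
      (lowerSubsets I) := fun σ hσ =>
    have ⟨⟨_, hsupp⟩, hanti⟩ := mem_antitoneMaps.1 hσ
    filter_ne_zero_mem_lowerSubsets hanti hsupp
  rw [map_sum, antitoneGF, coeff_mk, card_eq_sum_card_fiberwise hsupport, Nat.cast_sum]
  refine sum_congr rfl fun J hJ => ?_
  obtain ⟨hJI, hJ⟩ := mem_lowerSubsets.1 hJ
  rw [coeff_X_pow_card_mul_antitoneGF hJ, filter_support_eq_of_subset hJI]

variable {I : Finset α} {a b : α}

theorem isLowerSet_insert_of_Iio_eq (ha : Set.Iio a = I) :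
    IsLowerSet ((insert a I : Finset α) : Set α) := by
  rw [coe_insert, ← ha, Set.Iio_insert]
  exact isLowerSet_Iic a

theorem insert_subset_of_mem_of_Iio_eq {J : Finset α} (ha : Set.Iio a = I)
    (hJ : IsLowerSet (J : Set α)) (haJ : a ∈ J) : insert a I ⊆ J :=
  insert_subset haJ fun _ hc => hJ (ha.ge hc).le haJ

theorem lowerSubsets_insert (ha : Set.Iio a = I) :
    lowerSubsets (insert a I) = insert (insert a I) (lowerSubsets I) := by
  ext J
  simp only [mem_insert, mem_lowerSubsets]
  constructor
  · rintro ⟨hsub, hJ⟩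
    by_cases haJ : a ∈ J
    · exact .inl (hsub.antisymm (insert_subset_of_mem_of_Iio_eq ha hJ haJ))
    · exact .inr ⟨(subset_insert_iff_of_notMem haJ).1 hsub, hJ⟩
  · rintro (rfl | ⟨hsub, hJ⟩)
    · exact ⟨Subset.rfl, isLowerSet_insert_of_Iio_eq ha⟩
    · exact ⟨hsub.trans (subset_insert a I), hJ⟩

theorem lowerSubsets_insert_insert (ha : Set.Iio a = I) (hb : Set.Iio b = I) :
    lowerSubsets (insert b (insert a I)) =
      insert (insert b (insert a I)) (insert (insert b I) (lowerSubsets (insert a I))) := by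
  ext J
  simp only [mem_insert, mem_lowerSubsets]
  constructor
  · rintro ⟨hsub, hJ⟩
    by_cases hbJ : b ∈ J
    · have hbI := insert_subset_of_mem_of_Iio_eq hb hJ hbJ
      by_cases haJ : a ∈ J
      · exact .inl (hsub.antisymm (by grind))
      · exact .inr (.inl (Subset.antisymm (by grind) hbI))
    · exact .inr (.inr ⟨(subset_insert_iff_of_notMem hbJ).1 hsub, hJ⟩)
  · have hlow_a := isLowerSet_insert_of_Iio_eq ha
    have hlow_b := isLowerSet_insert_of_Iio_eq hb
    rintro (rfl | rfl | ⟨hsub, hJ⟩)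
    · refine ⟨Subset.rfl, ?_⟩
      convert hlow_b.union hlow_a using 1
      grind
    · exact ⟨insert_subset_insert b (subset_insert a I), hlow_b⟩
    · exact ⟨hsub.trans (subset_insert b _), hJ⟩

theorem antitoneGF_insert_mul (ha : Set.Iio a = I) :
    antitoneGF (insert a I) * (1 - X ^ (#I + 1)) = antitoneGF I := by
  have haI := notMem_of_Iio_eq ha
  have hnew : insert a I ∉ lowerSubsets I := fun h =>
    haI ((mem_lowerSubsets.1 h).1 (mem_insert_self a I))
  have hrec := antitoneGF_eq_sum_lowerSubsets (insert a I)
  rw [lowerSubsets_insert ha, sum_insert hnew, ← antitoneGF_eq_sum_lowerSubsets,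
    card_insert_of_notMem haI] at hrec
  linear_combination hrec

theorem antitoneGF_insert_insert_mul (ha : Set.Iio a = I) (hb : Set.Iio b = I) (hab : a ≠ b) :
    antitoneGF (insert b (insert a I)) * ((1 - X ^ (#I + 1)) * (1 - X ^ (#I + 2))) =
      antitoneGF I * (1 + X ^ (#I + 1)) := by
  have haI := notMem_of_Iio_eq ha
  have hbI := notMem_of_Iio_eq hb
  have hb_insert : b ∉ insert a I := by simp [hbI, hab.symm]
  have hnew_b : insert b I ∉ lowerSubsets (insert a I) := fun h =>
    hb_insert ((mem_lowerSubsets.1 h).1 (mem_insert_self b I))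
  have hnew : insert b (insert a I) ∉ insert (insert b I) (lowerSubsets (insert a I)) := by
    rw [mem_insert, not_or]
    refine ⟨fun h => ?_, fun h => hb_insert ((mem_lowerSubsets.1 h).1 (mem_insert_self b _))⟩
    have : a ∈ insert b I := h ▸ mem_insert_of_mem (mem_insert_self a I)
    simp [haI, hab] at this
  have hrec := antitoneGF_eq_sum_lowerSubsets (insert b (insert a I))
  rw [lowerSubsets_insert_insert ha hb, sum_insert hnew, sum_insert hnew_b,
    ← antitoneGF_eq_sum_lowerSubsets, card_insert_of_notMem hb_insert,
    card_insert_of_notMem haI, card_insert_of_notMem hbI] at hrec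
  linear_combination (1 - X ^ (#I + 1)) * hrec + antitoneGF_insert_mul ha +
    X ^ (#I + 1) * antitoneGF_insert_mul hb

end AntitoneMaps

theorem prel.half_lt {n i j : ℕ} (hn : 1 ≤ n) (h : prel n i j) : i / 2 < j / 2 := by
  rcases h with h | ⟨k, h⟩ | h <;> omega

theorem pOrd.eq_or_half_lt {n i j : ℕ} (hn : 1 ≤ n) (h : pOrd n i j) : i = j ∨ i / 2 < j / 2 := by
  induction h with
  | refl => exact .inl rfl
  | tail _ hcover ih =>
    have := hcover.half_lt hn
    rcases ih with rfl | ih <;> omega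

theorem prel_of_half_eq {n i j : ℕ} (hi : 1 ≤ i) (hj : j ≤ 2 * n) (h : j / 2 = i / 2 + 1) :
    prel n i j := by
  by_cases hbot : i = 1
  · exact .inl (by omega)
  by_cases htop : j = 2 * n
  · exact .inr (.inr (by omega))
  · exact .inr (.inl ⟨i / 2, by omega, by omega, by omega, by omega⟩)

theorem pOrd_of_half_lt {n i j : ℕ} (hi : 1 ≤ i) (hj : j ≤ 2 * n) (h : i / 2 < j / 2) :
    pOrd n i j := by
  obtain ⟨d, hd⟩ := Nat.exists_eq_add_of_lt h
  induction d generalizing j with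
  | zero => exact .single (prel_of_half_eq hi hj hd)
  | succ d ih =>
    have hpred : pOrd n i (2 * (j / 2 - 1)) := ih (by omega) (by omega) (by omega)
    exact .tail hpred (prel_of_half_eq (by omega) hj (by omega))

/-- The 2-rowed poset with double diagonals `P_n`, the element with label `i + 1` being represented
by `i : Fin (2 * n)`. A type of its own, since `Fin (2 * n)` already carries the usual order. -/
def TwoRowedPoset (n : ℕ) : Type := Fin (2 * n)

namespace TwoRowedPoset

variable {n : ℕ}

instance : Fintype (TwoRowedPoset n) := inferInstanceAs (Fintype (Fin (2 * n)))

instance : DecidableEq (TwoRowedPoset n) := inferInstanceAs (DecidableEq (Fin (2 * n)))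

/-- The label in `{1, …, 2n}` of an element of `P_n`. -/
def label (i : TwoRowedPoset n) : ℕ := Fin.val i + 1

theorem one_le_label (i : TwoRowedPoset n) : 1 ≤ i.label := Nat.le_add_left 1 _

theorem label_le (i : TwoRowedPoset n) : i.label ≤ 2 * n := Fin.isLt i

theorem label_injective : Function.Injective (label (n := n)) := fun _ _ h =>
  Fin.ext (Nat.succ_injective h)

theorem exists_label_eq {l : ℕ} (hl : 1 ≤ l) (hl' : l ≤ 2 * n) :
    ∃ i : TwoRowedPoset n, i.label = l :=
  ⟨⟨l - 1, by omega⟩, Nat.sub_add_cancel hl⟩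

theorem eq_or_half_label_lt_of_pOrd {i j : TwoRowedPoset n} (h : pOrd n i.label j.label) :
    i = j ∨ i.label / 2 < j.label / 2 :=
  (h.eq_or_half_lt (by have := i.one_le_label; have := i.label_le; omega)).imp_left
    fun h => label_injective h

instance : PartialOrder (TwoRowedPoset n) where
  le i j := pOrd n i.label j.label
  le_refl _ := .refl
  le_trans _ _ _ := .trans
  le_antisymm i j hij hji := by
    rcases eq_or_half_label_lt_of_pOrd hij with rfl | hij
    · rfl
    rcases eq_or_half_label_lt_of_pOrd hji with rfl | hji
    · rfl
    omega

theorem lt_iff {i j : TwoRowedPoset n} : i < j ↔ i.label / 2 < j.label / 2 := by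
  constructor
  · intro h
    exact (eq_or_half_label_lt_of_pOrd h.le).resolve_left h.ne
  · intro h
    refine lt_of_le_of_ne (pOrd_of_half_lt i.one_le_label j.label_le h) ?_
    rintro rfl
    exact h.false

/-- The set of the elements of `P_n` with labels `1, …, m`. -/
def firstLabels (n m : ℕ) : Finset (TwoRowedPoset n) := {i | i.label ≤ m}

theorem mem_firstLabels {m : ℕ} {i : TwoRowedPoset n} : i ∈ firstLabels n m ↔ i.label ≤ m :=
  mem_filter_univ i

theorem firstLabels_zero : firstLabels n 0 = ∅ :=
  filter_eq_empty_iff.2 fun i _ => Nat.not_le_of_lt i.one_le_label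

theorem firstLabels_two_mul : firstLabels n (2 * n) = univ :=
  filter_true_of_mem fun i _ => i.label_le

theorem insert_firstLabels {m : ℕ} {i : TwoRowedPoset n} (hi : i.label = m + 1) :
    insert i (firstLabels n m) = firstLabels n (m + 1) := by
  ext j
  rw [mem_insert, mem_firstLabels, mem_firstLabels, ← label_injective.eq_iff, hi]
  omega

theorem card_firstLabels {m : ℕ} (hm : m ≤ 2 * n) : #(firstLabels n m) = m := by
  induction m with
  | zero => rw [firstLabels_zero, card_empty]
  | succ m ih =>
    obtain ⟨i, hi⟩ := exists_label_eq (Nat.le_add_left 1 m) hm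
    rw [← insert_firstLabels hi, card_insert_of_notMem (by simp [mem_firstLabels, hi]),
      ih (by omega)]

theorem Iio_eq_firstLabels {k : ℕ} {i : TwoRowedPoset n} (hi : i.label / 2 = k + 1) :
    Set.Iio i = firstLabels n (2 * k + 1) := by
  ext j
  rw [Set.mem_Iio, mem_coe, mem_firstLabels, lt_iff, hi]
  omega

theorem Iio_eq_firstLabels_zero {i : TwoRowedPoset n} (hi : i.label = 1) :
    Set.Iio i = firstLabels n 0 := by
  ext j
  rw [Set.mem_Iio, mem_coe, mem_firstLabels, lt_iff, hi]
  have := j.one_le_label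
  omega

theorem antitoneGF_firstLabels_one (hn : 1 ≤ n) :
    antitoneGF (firstLabels n 1) * (1 - X) = 1 := by
  obtain ⟨i, hi⟩ := exists_label_eq (n := n) le_rfl (by omega)
  have h := antitoneGF_insert_mul (Iio_eq_firstLabels_zero hi)
  rwa [insert_firstLabels hi, firstLabels_zero, card_empty, antitoneGF_empty, zero_add,
    pow_one] at h

theorem antitoneGF_firstLabels_add_two {k : ℕ} (hk : k + 1 < n) :
    antitoneGF (firstLabels n (2 * k + 3)) * ((1 - X ^ (2 * k + 2)) * (1 - X ^ (2 * k + 3))) =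
      antitoneGF (firstLabels n (2 * k + 1)) * (1 + X ^ (2 * k + 2)) := by
  obtain ⟨i, hi⟩ := exists_label_eq (n := n) (l := 2 * k + 2) (by omega) (by omega)
  obtain ⟨j, hj⟩ := exists_label_eq (n := n) (l := 2 * k + 3) (by omega) (by omega)
  have hij : i ≠ j := by rintro rfl; omega
  have h := antitoneGF_insert_insert_mul (Iio_eq_firstLabels (i := i) (k := k) (by omega))
    (Iio_eq_firstLabels (i := j) (by omega)) hij
  rwa [insert_firstLabels hi, insert_firstLabels hj, card_firstLabels (by omega)] at h

theorem antitoneGF_univ_mul (n : ℕ) :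
    antitoneGF (univ : Finset (TwoRowedPoset (n + 1))) * (1 - X ^ (2 * n + 2)) =
      antitoneGF (firstLabels (n + 1) (2 * n + 1)) := by
  obtain ⟨i, hi⟩ := exists_label_eq (n := n + 1) (l := 2 * n + 2) (by omega) (by omega)
  have h := antitoneGF_insert_mul (Iio_eq_firstLabels (i := i) (k := n) (by omega))
  rwa [insert_firstLabels hi, card_firstLabels (by omega),
    show 2 * n + 1 + 1 = 2 * (n + 1) from rfl, firstLabels_two_mul] at h

theorem antitoneGF_firstLabels_mul_prod {k : ℕ} (hk : k < n) :
    antitoneGF (firstLabels n (2 * k + 1)) * ∏ j ∈ Icc 1 (2 * k + 1), (1 - X ^ j) =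
      ∏ j ∈ Icc 1 k, (1 + X ^ (2 * j)) := by
  induction k with
  | zero => simpa using antitoneGF_firstLabels_one hk
  | succ k ih =>
    have hstep := antitoneGF_firstLabels_add_two hk
    rw [show 2 * (k + 1) + 1 = 2 * k + 2 + 1 from rfl, prod_Icc_succ_top (b := k) (by omega),
      ← ih (by omega), prod_Icc_succ_top (b := 2 * k + 2) (by omega),
      prod_Icc_succ_top (b := 2 * k + 1) (by omega)]
    linear_combination (∏ j ∈ Icc 1 (2 * k + 1), (1 - X ^ j)) * hstep

end TwoRowedPoset

theorem fPq_eq_antitoneGF_univ (n : ℕ) :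
    fPq n = antitoneGF (univ : Finset (TwoRowedPoset n)) := by
  ext m
  have hset : {σ : TwoRowedPoset n → ℕ | Antitone σ ∧ ∑ a, σ a = m} =
      antitoneMaps (univ : Finset (TwoRowedPoset n)) m := by
    ext σ
    rw [Set.mem_ofPred_eq, mem_coe, mem_antitoneMaps]
    exact ⟨fun h => ⟨⟨h.2, fun a _ => mem_univ a⟩, h.1⟩, fun h => ⟨h.2, h.1.1⟩⟩
  rw [fPq, antitoneGF, coeff_mk, coeff_mk, ← Set.ncard_coe_finset, ← hset]
  rfl

/-- `f_{P_n}(q) ∏_{k=1}^{2n} (1 - q^k) = ∏_{k=1}^{n-1} (1 + q^{2k})`. -/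
theorem two_rowed_q_gf (n : ℕ) (hn : 2 ≤ n) :
    fPq n * ∏ k ∈ Finset.Icc 1 (2 * n), (1 - (PowerSeries.X : PowerSeries ℤ) ^ k) =
      ∏ k ∈ Finset.Icc 1 (n - 1), (1 + (PowerSeries.X : PowerSeries ℤ) ^ (2 * k)) := by
  obtain ⟨n, rfl⟩ := Nat.exists_eq_add_of_le' (show 1 ≤ n by omega)
  have hchain := TwoRowedPoset.antitoneGF_firstLabels_mul_prod n.lt_succ_self
  have htop := TwoRowedPoset.antitoneGF_univ_mul n
  rw [fPq_eq_antitoneGF_univ, show 2 * (n + 1) = 2 * n + 1 + 1 by ring,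
    prod_Icc_succ_top (by omega), Nat.add_sub_cancel, ← hchain]
  linear_combination (∏ j ∈ Icc 1 (2 * n + 1), (1 - (X : ℤ⟦X⟧) ^ j)) * htop
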